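/- Let n ≥ 5 and let G be a subgroup of the symmetric group S_n. If the denominator of the rational number D_n / n! in lowest terms divides |G|, then G = A_n or G = S_n. -/

import Mathlib

/-!
The hypothesis says that the index of `G` divides `D_n`. Since `D_{m + k} ≡ ± D_k (mod m)`, the
number `D_n` is coprime to `n` and `n - 2`, and to `n - 3` when `n` is even. An invariant set or a
block of imprimitivity would put a binomial coefficient into the index, which those coprimality
relations exclude; so `G` is primitive.

Any prime `p ≤ n` not dividing `D_n` yields a `p`-cycle in `G`, because a `p`-cycle acting on the
cosets of `G` has a fixed point. Apart from `n = 7`, one of these primes is `3` or at most `n - 3`,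
and Jordan's theorem on primitive groups containing a `p`-cycle gives `A_n ≤ G`. For `n = 7`, a
`5`-cycle makes `G` triply transitive, so that the index divides `gcd(1854, 4!) = 6 < 7`.
-/

open MulAction Equiv Equiv.Perm
open scoped Pointwise Nat commutatorElement

theorem numDerangements_add_modEq (m k : ℕ) :
    (numDerangements (m + k) : ℤ) ≡ (-1) ^ m * numDerangements k [ZMOD m] := by
  induction k with
  | zero =>
    cases m with
    | zero => simp
    | succ m =>
      rw [add_zero, numDerangements_succ]
      refine Int.modEq_iff_dvd.mpr ⟨-numDerangements m, ?_⟩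
      simp only [Nat.cast_add, Nat.cast_one, numDerangements_zero]
      ring
  | succ k ih =>
    rw [← add_assoc, numDerangements_succ, numDerangements_succ]
    calc ((m + k : ℕ) + 1 : ℤ) * numDerangements (m + k) - (-1) ^ (m + k)
        ≡ (k + 1) * ((-1) ^ m * numDerangements k) - (-1) ^ (m + k) [ZMOD m] := by
          refine (Int.ModEq.mul ?_ ih).sub_right _
          exact Int.modEq_iff_dvd.mpr ⟨-1, by push_cast; ring⟩
      _ = (-1) ^ m * ((k + 1) * numDerangements k - (-1) ^ k) := by ring

theorem dvd_numDerangements_add_iff {d m : ℕ} (h : d ∣ m) (k : ℕ) :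
    d ∣ numDerangements (m + k) ↔ d ∣ numDerangements k := by
  have hmod := (numDerangements_add_modEq m k).of_dvd (Int.natCast_dvd_natCast.mpr h)
  have hunit : IsUnit ((-1 : ℤ) ^ m) := isUnit_one.neg.pow m
  rw [← Int.natCast_dvd_natCast, hmod.dvd_iff, hunit.dvd_mul_left, Int.natCast_dvd_natCast]

theorem coprime_numDerangements_add {m k : ℕ} (h : m.Coprime (numDerangements k)) :
    m.Coprime (numDerangements (m + k)) :=
  Nat.coprime_of_dvd fun _ hp hm hD =>
    Nat.not_coprime_of_dvd_of_dvd hp.one_lt hm ((dvd_numDerangements_add_iff hm k).mp hD) h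

theorem coprime_numDerangements_of_even {n : ℕ} (hn : 3 ≤ n) (heven : Even n) :
    (n - 3).Coprime (numDerangements n) := by
  obtain ⟨m, rfl⟩ := Nat.exists_eq_add_of_le' hn
  have hm : ¬ 2 ∣ m := by
    rw [even_iff_two_dvd] at heven
    lia
  exact coprime_numDerangements_add (k := 3) (Nat.prime_two.coprime_iff_not_dvd.mpr hm).symm

theorem exists_prime_ne_three_dvd_mul_add_two {z : ℕ} (hz : 2 ≤ z) :
    ∃ p, p.Prime ∧ p ≠ 3 ∧ p ∣ z * (z + 2) := by
  obtain ⟨w, hw, hw3, hwz⟩ : ∃ w, w ≠ 1 ∧ ¬ 3 ∣ w ∧ w ∣ z * (z + 2) := by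
    by_cases hz3 : 3 ∣ z
    · exact ⟨z + 2, by lia, by lia, dvd_mul_left ..⟩
    · exact ⟨z, by lia, hz3, dvd_mul_right ..⟩
  obtain ⟨p, hp, hpw⟩ := Nat.exists_prime_and_dvd hw
  exact ⟨p, hp, fun h => hw3 (h ▸ hpw), hpw.trans hwz⟩

theorem exists_prime_not_dvd_numDerangements_two_pow_add_three {k : ℕ} (hk : k ≠ 0) (hk2 : k ≠ 2) :
    ∃ p, p.Prime ∧ ¬ p ∣ numDerangements (2 ^ k + 3) ∧ (p = 3 ∨ p ≤ 2 ^ k) := by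
  rcases Nat.even_or_odd' k with ⟨l, rfl | rfl⟩
  · obtain ⟨z, hz⟩ : ∃ z, 2 ^ l = z + 1 := Nat.exists_eq_succ_of_ne_zero (by positivity)
    have hl : 2 ^ 2 ≤ 2 ^ l := Nat.pow_le_pow_right two_pos (by lia)
    have hpow : 2 ^ (2 * l) = z * (z + 2) + 1 := by rw [mul_comm, pow_mul, hz]; ring
    -- `p ∣ 2 ^ (2 * l) - 1`, so `D_{2 ^ (2 * l) + 3} ≡ ± D_4 = ± 9` modulo `p`.
    obtain ⟨p, hp, hp3, hpz⟩ := exists_prime_ne_three_dvd_mul_add_two (z := z) (by lia)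
    refine ⟨p, hp, ?_, Or.inr ?_⟩
    · rw [hpow, add_assoc, dvd_numDerangements_add_iff hpz]
      intro h9
      exact hp3 ((Nat.prime_dvd_prime_iff_eq hp Nat.prime_three).mp
        (hp.dvd_of_dvd_pow (n := 2) h9))
    · have := Nat.le_of_dvd (by nlinarith) hpz
      lia
  · have h3 : 3 ∣ 2 ^ (2 * l + 1) + 1 := by
      simpa using Odd.nat_add_dvd_pow_add_pow 2 1 (odd_two_mul_add_one l)
    refine ⟨3, Nat.prime_three, ?_, Or.inl rfl⟩
    rw [show 2 ^ (2 * l + 1) + 3 = 2 ^ (2 * l + 1) + 1 + 2 by rfl, dvd_numDerangements_add_iff h3]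
    decide

theorem exists_prime_not_dvd_numDerangements {n : ℕ} (hn : 5 ≤ n) (hn7 : n ≠ 7) :
    ∃ p, p.Prime ∧ ¬ p ∣ numDerangements n ∧ (p = 3 ∨ p + 3 ≤ n) := by
  obtain ⟨m, rfl⟩ := Nat.exists_eq_add_of_le' (show 3 ≤ n by lia)
  by_cases heven : 2 ∣ m + 3
  · refine ⟨2, Nat.prime_two, ?_, Or.inr hn⟩
    simpa using dvd_numDerangements_add_iff heven 0
  rcases m.eq_two_pow_or_exists_odd_prime_and_dvd with ⟨k, rfl⟩ | ⟨p, hp, hpm, hodd⟩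
  · have hk0 : k ≠ 0 := by rintro rfl; lia
    have hk2 : k ≠ 2 := by rintro rfl; lia
    simpa using exists_prime_not_dvd_numDerangements_two_pow_add_three hk0 hk2
  · refine ⟨p, hp, ?_, Or.inr (by simpa using Nat.le_of_dvd (by lia) hpm)⟩
    rw [dvd_numDerangements_add_iff hpm]
    exact fun h => hodd.ne_two_of_dvd_nat dvd_rfl
      ((Nat.prime_dvd_prime_iff_eq hp Nat.prime_two).mp h)

theorem not_sq_dvd_factorial {p : ℕ} (hp : p.Prime) : ¬ p ^ 2 ∣ p ! := by
  obtain ⟨m, rfl⟩ := Nat.exists_eq_succ_of_ne_zero hp.ne_zero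
  rw [Nat.factorial_succ, sq]
  intro h
  exact absurd (hp.dvd_factorial.mp (Nat.dvd_of_mul_dvd_mul_left hp.pos h)) (by lia)

theorem sub_dvd_choose_mul_descFactorial (n k s : ℕ) :
    n - s ∣ n.choose k * k.descFactorial (s + 1) := by
  rcases lt_or_ge s k with hsk | hks
  · have hfactor : n.choose k * k.descFactorial (s + 1) =
        (n - s) * (n.descFactorial s * (n - (s + 1)).choose (k - (s + 1))) := by
      rw [Nat.descFactorial_eq_factorial_mul_choose, mul_left_comm, Nat.choose_mul hsk, ← mul_assoc,
        ← Nat.descFactorial_eq_factorial_mul_choose, Nat.descFactorial_succ, mul_assoc]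
    exact hfactor ▸ dvd_mul_right ..
  · rw [Nat.descFactorial_eq_zero_iff_lt.mpr (Nat.lt_succ_of_le hks), mul_zero]
    exact dvd_zero _

theorem sub_dvd_descFactorial_of_coprime_choose {n k s : ℕ} (h : (n - s).Coprime (n.choose k)) :
    n - s ∣ k.descFactorial (s + 1) :=
  h.dvd_of_dvd_mul_left (sub_dvd_choose_mul_descFactorial n k s)

theorem eq_two_and_even_of_mul_sub_two_dvd {a b : ℕ} (ha : 3 ≤ a) (hb : 2 ≤ b)
    (h : a * b - 2 ∣ (a - 1).descFactorial 2) : b = 2 ∧ Even a := by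
  obtain ⟨c, rfl⟩ := Nat.exists_eq_add_of_le' (show 2 ≤ a by lia)
  obtain ⟨m, hm⟩ := Nat.exists_eq_add_of_le' (show 2 ≤ (c + 2) * b by nlinarith)
  obtain ⟨t, ht⟩ := h
  replace ht : c * (c + 1) = m * t := by simpa [hm, Nat.descFactorial_succ] using ht
  have hmc : 2 * (c + 1) ≤ m := by nlinarith
  have htc : 2 * t ≤ c := by nlinarith
  have hdvd : c + 2 ∣ 2 * t + 2 := by
    have hsum : (c + 2) * c + (2 * t + 2) = (c + 2) * (b * t + 1) := by
      linear_combination ht - t * hm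
    exact (Nat.dvd_add_right (dvd_mul_right ..)).mp (hsum ▸ dvd_mul_right ..)
  have hct : c = 2 * t := by
    have := Nat.le_of_dvd (by lia) hdvd
    lia
  subst hct
  have hmt : m = 2 * (2 * t + 1) := Nat.eq_of_mul_eq_mul_right (show 0 < t by lia) (by linarith)
  refine ⟨?_, by simp [parity_simps]⟩
  exact Nat.eq_of_mul_eq_mul_left (show 0 < 2 * t + 2 by lia) (by lia)

theorem two_mul_sub_three_not_dvd_descFactorial {a : ℕ} (ha : 4 ≤ a) :
    ¬ 2 * a - 3 ∣ (a - 1).descFactorial 3 := by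
  obtain ⟨c, rfl⟩ := Nat.exists_eq_add_of_le' (show 3 ≤ a by lia)
  intro h
  replace h : 2 * c + 3 ∣ c * ((c + 1) * (c + 2)) := by
    simpa [Nat.descFactorial_succ, show 2 * (c + 3) - 3 = 2 * c + 3 by lia] using h
  have h1 : (2 * c + 3).Coprime (c + 1) := by
    rw [show 2 * c + 3 = 1 + (c + 1) * 2 by ring]
    simp
  have h2 : (2 * c + 3).Coprime (c + 2) := by
    rw [show 2 * c + 3 = (c + 1) + (c + 2) * 1 by ring, Nat.coprime_add_mul_left_left]
    exact Nat.coprime_self_add_right.mpr (Nat.coprime_one_right _)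
  have := Nat.le_of_dvd (by lia) ((h1.mul_right h2).dvd_of_dvd_mul_right h)
  lia

theorem dvd_of_den_div_dvd {a b k : ℕ} (hbk : b * k ≠ 0)
    (h : ((a : ℚ) / (b * k : ℕ)).den ∣ k) : b ∣ a := by
  set q : ℚ := a / (b * k : ℕ) with hq
  obtain ⟨t, ht⟩ := h
  have ha : (a : ℚ) = b * (q.num * t) := by
    rw [← Rat.mul_den_eq_num q, ← (eq_div_iff (by exact_mod_cast hbk)).mp hq, ht]
    push_cast
    ring
  exact Int.natCast_dvd_natCast.mp ⟨q.num * t, by exact_mod_cast ha⟩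

theorem exists_conj_mem_of_not_dvd_index {K : Type*} [Group K] {G : Subgroup K} {p : ℕ}
    [Fact p.Prime] (hG : ¬ p ∣ G.index) {c : K} (hc : IsPGroup p (Subgroup.zpowers c)) :
    ∃ s : K, s⁻¹ * c * s ∈ G := by
  obtain ⟨q, hq⟩ := hc.nonempty_fixed_point_of_prime_not_dvd_card (K ⧸ G) hG
  obtain ⟨s, rfl⟩ := QuotientGroup.mk_surjective q
  have hfix : ((c * s : K) : K ⧸ G) = s := hq ⟨c, Subgroup.mem_zpowers c⟩
  exact ⟨s, by simpa [mul_assoc] using QuotientGroup.eq.mp hfix.symm⟩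

theorem isPGroup_zpowers_of_orderOf_eq {K : Type*} [Group K] {p : ℕ} {c : K}
    (hc : orderOf c = p) : IsPGroup p (Subgroup.zpowers c) :=
  .of_card (n := 1) (by rw [Nat.card_zpowers, hc, pow_one])

theorem exists_mem_conj_mem_zpowers {K : Type*} [Group K] {H : Subgroup K} {p : ℕ}
    [Fact p.Prime] (hH : ¬ p ^ 2 ∣ Nat.card H) {x y : K} (hx : x ∈ H) (hy : y ∈ H)
    (hxp : orderOf x = p) (hyp : orderOf y = p) :
    ∃ s ∈ H, s⁻¹ * x * s ∈ Subgroup.zpowers y := by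
  have hindex : ¬ p ∣ (Subgroup.zpowers (⟨y, hy⟩ : H)).index := by
    intro hdvd
    apply hH
    rw [← Subgroup.index_mul_card (Subgroup.zpowers (⟨y, hy⟩ : H)), Nat.card_zpowers,
      Subgroup.orderOf_mk, hyp, sq]
    exact Nat.mul_dvd_mul_right hdvd p
  obtain ⟨s, hs⟩ := exists_conj_mem_of_not_dvd_index hindex (c := (⟨x, hx⟩ : H))
    (isPGroup_zpowers_of_orderOf_eq (by rw [Subgroup.orderOf_mk, hxp]))
  obtain ⟨i, hi⟩ := Subgroup.mem_zpowers_iff.mp hs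
  exact ⟨s, s.2, Subgroup.mem_zpowers_iff.mpr ⟨i, by simpa using congrArg Subtype.val hi⟩⟩

theorem commute_commutatorElement_of_conj_mem_zpowers {K : Type*} [Group K] {a b g : K}
    (ha : a⁻¹ * g * a ∈ Subgroup.zpowers g) (hb : b⁻¹ * g * b ∈ Subgroup.zpowers g) :
    Commute ⁅a, b⁆ g := by
  obtain ⟨i, hi⟩ := Subgroup.mem_zpowers_iff.mp ha
  obtain ⟨j, hj⟩ := Subgroup.mem_zpowers_iff.mp hb
  have hba : (b * a)⁻¹ * g * (b * a) = (a * b)⁻¹ * g * (a * b) := by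
    calc (b * a)⁻¹ * g * (b * a) = a⁻¹ * (b⁻¹ * g * b) * a := by group
      _ = (g ^ i) ^ j := by rw [← hj, hi]; simpa using (conj_zpow (a := a⁻¹) (b := g)).symm
      _ = (g ^ j) ^ i := by rw [zpow_comm]
      _ = b⁻¹ * (a⁻¹ * g * a) * b := by rw [← hi, hj]; simpa using conj_zpow (a := b⁻¹) (b := g)
      _ = (a * b)⁻¹ * g * (a * b) := by group
  calc ⁅a, b⁆ * g = (a * b) * ((b * a)⁻¹ * g * (b * a)) * (b * a)⁻¹ := by
        rw [commutatorElement_def]; group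
    _ = g * ⁅a, b⁆ := by rw [hba, commutatorElement_def]; group

section

variable {α : Type*} {s : Set α} {a b σ τ : Perm α}

theorem eqOn_mul_of_smul_eq (ha : Set.EqOn a σ s) (hb : Set.EqOn b τ s) (hτ : τ • s = s) :
    Set.EqOn ⇑(a * b) ⇑(σ * τ) s := fun d hd => by
  have hτd : τ d ∈ s := hτ ▸ Set.smul_mem_smul_set hd
  rw [Perm.mul_apply, Perm.mul_apply, hb hd, ha hτd]

theorem eqOn_inv_of_smul_eq (ha : Set.EqOn a σ s) (hσ : σ • s = s) :
    Set.EqOn ⇑a⁻¹ ⇑σ⁻¹ s := fun d hd => by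
  have hσd : σ⁻¹ d ∈ s := Set.mem_smul_set_iff_inv_smul_mem.mp (hσ.symm ▸ hd)
  rw [Perm.inv_eq_iff_eq, ha hσd, ← Perm.mul_apply, mul_inv_cancel, Perm.one_apply]

theorem eqOn_commutatorElement_of_smul_eq (ha : Set.EqOn a σ s) (hb : Set.EqOn b τ s)
    (hσ : σ • s = s) (hτ : τ • s = s) : Set.EqOn ⇑⁅a, b⁆ ⇑⁅σ, τ⁆ s := by
  have hσ' : σ⁻¹ • s = s := inv_smul_eq_iff.mpr hσ.symm
  have hτ' : τ⁻¹ • s = s := inv_smul_eq_iff.mpr hτ.symm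
  exact eqOn_mul_of_smul_eq (eqOn_mul_of_smul_eq (eqOn_mul_of_smul_eq ha hb hτ)
    (eqOn_inv_of_smul_eq ha hσ) hσ') (eqOn_inv_of_smul_eq hb hτ) hτ'

end

theorem exists_mem_eqOn_of_isMultiplyPretransitive {α : Type*} {G : Subgroup (Perm α)}
    (s : Finset α) [IsMultiplyPretransitive G α s.card] (τ : Perm α) : ∃ h ∈ G, Set.EqOn h τ s := by
  let e : Fin s.card ↪ α := s.equivFin.symm.toEmbedding.trans (.subtype _)
  obtain ⟨h, hh⟩ := isMultiplyPretransitive_iff.mp ‹_› e (e.trans τ.toEmbedding)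
  refine ⟨h, h.2, fun d hd => ?_⟩
  simpa [e, Subgroup.smul_def] using DFunLike.congr_fun hh (s.equivFin ⟨d, hd⟩)

theorem card_fixingSubgroup_compl {α : Type*} [Finite α] (s : Set α) :
    Nat.card (fixingSubgroup (Perm α) sᶜ) = s.ncard ! := by
  have hindex := (isMultiplyPretransitive α _).index_of_fixingSubgroup_mul (Set.ncard_compl s)
  rw [Nat.sub_sub_self (Set.ncard_le_card s), ← Nat.card_perm,
    ← Subgroup.index_mul_card (fixingSubgroup (Perm α) sᶜ)] at hindex
  exact (mul_left_cancel₀ Subgroup.index_ne_zero_of_finite hindex).symm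

theorem commute_swap_of_apply_eq {α : Type*} [DecidableEq α] {g : Perm α} {x y : α}
    (hx : g x = x) (hy : g y = y) : Commute (swap x y) g := by
  rw [commute_iff_eq, swap_mul_eq_mul_swap, Perm.inv_eq_iff_eq.mpr hx.symm,
    Perm.inv_eq_iff_eq.mpr hy.symm]

theorem inv_mul_mem_zpowers_of_eqOn_fixedBy {α : Type*} [Finite α] {c g τ : Perm α}
    (hg : g.IsCycle) (hcg : Commute c g) (hτg : Commute τ g)
    (hcτ : Set.EqOn c τ (fixedBy α g)) : τ⁻¹ * c ∈ Subgroup.zpowers g := by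
  classical
  cases nonempty_fintype α
  obtain ⟨_, hmem⟩ := hg.commute_iff.mp (hτg.inv_left.mul_left hcg)
  have hsupport (d : α) (hd : (τ⁻¹ * c) d ≠ d) : d ∈ g.support := by
    contrapose! hd
    have hcd : c d = τ d := hcτ (notMem_support.mp hd)
    rw [Perm.mul_apply, hcd, Perm.inv_eq_iff_eq]
  rwa [ofSubtype_subtypePerm _ hsupport] at hmem

section

variable {α : Type*} [Fintype α] [DecidableEq α] {G : Subgroup (Perm α)} {g : Perm α}

theorem fixedBy_eq_compl_support (g : Perm α) : fixedBy α g = (g.support : Set α)ᶜ := by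
  ext
  simp

theorem exists_isCycle_mem_of_not_dvd_index {p : ℕ} [hp : Fact p.Prime]
    (hpα : p ≤ Fintype.card α) (hG : ¬ p ∣ G.index) : ∃ g ∈ G, g.IsCycle ∧ g.support.card = p := by
  obtain ⟨c, hc⟩ : ∃ c : Perm α, c.cycleType = {p} := by
    simp [exists_with_cycleType_iff, hpα, hp.out.two_le]
  have hcycle : c.IsCycle := by rw [← card_cycleType_eq_one, hc, Multiset.card_singleton]
  have hcard : c.support.card = p := by rw [← sum_cycleType, hc, Multiset.sum_singleton]
  obtain ⟨s, hs⟩ := exists_conj_mem_of_not_dvd_index hG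
    (isPGroup_zpowers_of_orderOf_eq (hcycle.orderOf.trans hcard))
  exact ⟨_, hs, by simpa using hcycle.conj (g := s⁻¹),
    by simpa [hcard] using card_support_conj (σ := s⁻¹) (τ := c)⟩

-- Frattini argument: `⟨g⟩` is a Sylow subgroup of the pointwise stabilizer of the fixed points of
-- `g`, so an element of `G` inducing `τ` on them can be corrected to normalize `⟨g⟩`.
theorem exists_mem_eqOn_conj_mem_zpowers {τ : Perm α}
    [IsMultiplyPretransitive G α g.supportᶜ.card] (hgG : g ∈ G) (hg : g.IsCycle)
    (hp : g.support.card.Prime) (hτ : τ • fixedBy α g = fixedBy α g) :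
    ∃ k ∈ G, Set.EqOn k τ (fixedBy α g) ∧ k⁻¹ * g * k ∈ Subgroup.zpowers g := by
  have := Fact.mk hp
  obtain ⟨h, hhG, hh⟩ := exists_mem_eqOn_of_isMultiplyPretransitive (G := G) g.supportᶜ τ
  rw [Finset.coe_compl, ← fixedBy_eq_compl_support] at hh
  have hconj : fixedBy α (h⁻¹ * g * h) = fixedBy α g := by
    have hfix : h • fixedBy α g = fixedBy α g := hh.image_eq.trans hτ
    simpa [inv_smul_eq_iff.mpr hfix.symm] using (smul_fixedBy α g h⁻¹).symm
  let H := G ⊓ fixingSubgroup (Perm α) (fixedBy α g)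
  have hH : ¬ g.support.card ^ 2 ∣ Nat.card H := fun hdvd => by
    refine not_sq_dvd_factorial hp (hdvd.trans ?_)
    rw [← Set.ncard_coe_finset, ← card_fixingSubgroup_compl, ← fixedBy_eq_compl_support]
    exact Subgroup.card_dvd_of_le inf_le_right
  have hgH : g ∈ H := ⟨hgG, (mem_fixingSubgroup_iff _).mpr fun _ hd => hd⟩
  have hconjH : h⁻¹ * g * h ∈ H := ⟨G.mul_mem (G.mul_mem (G.inv_mem hhG) hgG) hhG,
    (mem_fixingSubgroup_iff _).mpr fun _ hd => hconj.ge hd⟩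
  have horder : orderOf (h⁻¹ * g * h) = g.support.card := by
    simpa [hg.orderOf] using (MulAut.conj h⁻¹).orderOf_eq g
  obtain ⟨s, hsH, hs⟩ := exists_mem_conj_mem_zpowers hH hconjH hgH
    horder hg.orderOf
  refine ⟨h * s, G.mul_mem hhG hsH.1, fun d hd => ?_, by simpa [mul_assoc] using hs⟩
  have hsd : s d = d := (mem_fixingSubgroup_iff _).mp hsH.2 d hd
  rw [Perm.mul_apply, hsd, hh hd]

theorem isMultiplyPretransitive_of_isCycle_prime_mem (hG : IsPreprimitive G α) (hgG : g ∈ G)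
    (hg : g.IsCycle) (hp : g.support.card.Prime) :
    IsMultiplyPretransitive G α (g.supportᶜ.card + 1) := by
  rcases hm : g.supportᶜ.card with _ | m
  · exact is_one_pretransitive_iff.mpr hG.toIsPretransitive
  have hcompl : (g.support : Set α)ᶜ.ncard = m + 1 := by
    rw [← Finset.coe_compl, Set.ncard_coe_finset, hm]
  have hcard : m + 2 < Nat.card α := by
    have := hp.two_le
    rw [Nat.card_eq_fintype_card, ← g.support.card_add_card_compl, hm]
    lia
  have := isPretransitive_of_isCycle_mem hg hgG
  have hprime : (Nat.card (SubMulAction.ofFixingSubgroup G (g.support : Set α)ᶜ)).Prime := by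
    convert! hp
    rw [← Set.ncard_coe_finset]
    exact congrArg Set.ncard (by ext; simp [SubMulAction.mem_ofFixingSubgroup_iff])
  have := hG.isMultiplyPreprimitive hcompl hcard (IsPreprimitive.of_prime_card hprime)
  exact IsMultiplyPreprimitive.isMultiplyPretransitive ..

theorem isThreeCycle_commutatorElement_swap_swap {x y z : α} (hxy : x ≠ y) (hxz : x ≠ z)
    (hyz : y ≠ z) : ⁅swap x y, swap x z⁆.IsThreeCycle := by
  have hsq : ⁅swap x y, swap x z⁆ = (swap x y * swap x z) * (swap x y * swap x z) := by
    simp [commutatorElement_def, mul_assoc]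
  exact hsq ▸ (isThreeCycle_swap_mul_swap_same hxy hxz hyz).isThreeCycle_sq

-- The automorphism group of `⟨g⟩` is abelian, so the commutator of two elements of `G` normalizing
-- `⟨g⟩` centralizes `g` and is determined modulo `⟨g⟩` by its action on the fixed points of `g`.
theorem commutatorElement_mem_of_commute_isCycle_prime [IsMultiplyPretransitive G α g.supportᶜ.card]
    (hgG : g ∈ G) (hg : g.IsCycle) (hp : g.support.card.Prime) {σ τ : Perm α} (hσ : Commute σ g)
    (hτ : Commute τ g) : ⁅σ, τ⁆ ∈ G := by
  have hσfix : σ • fixedBy α g = fixedBy α g := fixedBy_mem_fixedBy_of_commute hσ.symm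
  have hτfix : τ • fixedBy α g = fixedBy α g := fixedBy_mem_fixedBy_of_commute hτ.symm
  obtain ⟨a, haG, haσ, hag⟩ := exists_mem_eqOn_conj_mem_zpowers (G := G) hgG hg hp hσfix
  obtain ⟨b, hbG, hbτ, hbg⟩ := exists_mem_eqOn_conj_mem_zpowers (G := G) hgG hg hp hτfix
  have hzpow : ⁅σ, τ⁆⁻¹ * ⁅a, b⁆ ∈ Subgroup.zpowers g :=
    inv_mul_mem_zpowers_of_eqOn_fixedBy hg (commute_commutatorElement_of_conj_mem_zpowers hag hbg)
      (((hσ.mul_left hτ).mul_left hσ.inv_left).mul_left hτ.inv_left)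
      (eqOn_commutatorElement_of_smul_eq haσ hbτ hσfix hτfix)
  have habG : ⁅a, b⁆ ∈ G :=
    G.mul_mem (G.mul_mem (G.mul_mem haG hbG) (G.inv_mem haG)) (G.inv_mem hbG)
  rw [← inv_mem_iff, ← G.mul_mem_cancel_right habG]
  exact Subgroup.zpowers_le.mpr hgG hzpow

theorem alternatingGroup_le_of_isPreprimitive_of_isCycle_prime_mem (hG : IsPreprimitive G α)
    (hgG : g ∈ G) (hg : g.IsCycle) (hp : g.support.card.Prime)
    (hcard : g.support.card + 3 ≤ Fintype.card α) : alternatingGroup α ≤ G := by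
  have hle : g.supportᶜ.card + 1 ≤ Nat.card α := by
    have := hp.two_le
    rw [Nat.card_eq_fintype_card, Finset.card_compl]
    lia
  have := isMultiplyPretransitive_of_isCycle_prime_mem hG hgG hg hp
  have : IsMultiplyPretransitive G α g.supportᶜ.card :=
    isMultiplyPretransitive_of_le (Nat.le_succ _) hle
  have hcompl : 2 < g.supportᶜ.card := by
    rw [Finset.card_compl]
    lia
  obtain ⟨x, y, z, hx, hy, hz, hxy, hxz, hyz⟩ := Finset.two_lt_card_iff.mp hcompl
  simp only [Finset.mem_compl, notMem_support] at hx hy hz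
  exact alternatingGroup_le_of_isPreprimitive_of_isThreeCycle_mem hG
    (isThreeCycle_commutatorElement_swap_swap hxy hxz hyz)
    (commutatorElement_mem_of_commute_isCycle_prime hgG hg hp
      (commute_swap_of_apply_eq hx hy) (commute_swap_of_apply_eq hx hz))

end

section

variable {α : Type*} [Finite α] {G : Subgroup (Perm α)} {B : Set α}

theorem index_dvd_factorial_of_isMultiplyPretransitive {k : ℕ} (hk : k ≤ Nat.card α)
    [hG : IsMultiplyPretransitive G α k] : G.index ∣ (Nat.card α - k)! := by
  obtain ⟨s, -, hs⟩ := Set.exists_subset_card_eq (s := (Set.univ : Set α)) (by simpa using hk)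
  have hfix := hG.index_of_fixingSubgroup_mul hs
  obtain ⟨t, ht⟩ := (fixingSubgroup G s).index_dvd_card
  refine ⟨t, mul_left_cancel₀ (Subgroup.index_ne_zero_of_finite (H := fixingSubgroup G s)) ?_⟩
  rw [hfix, ← Nat.card_perm, ← G.index_mul_card, ht, mul_left_comm]

theorem choose_ncard_dvd_index (hB : ∀ g ∈ G, g • B = B) :
    (Nat.card α).choose B.ncard ∣ G.index := by
  classical
  cases nonempty_fintype α
  let s : Set.powersetCard α B.ncard := ⟨B.toFinset, by
    rw [Set.powersetCard.mem_iff, Set.ncard_eq_toFinset_card']⟩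
  have hs : ((s : Finset α) : Set α) = B := by simp [s]
  have := Set.powersetCard.isPretransitive (α := α) (n := B.ncard)
  rw [← Set.powersetCard.card, ← index_stabilizer_of_transitive (Perm α) s]
  refine Subgroup.index_dvd_of_le fun g hg => ?_
  have hgs := hB g hg
  rw [← hs] at hgs
  rwa [Set.powersetCard.stabilizer_coe, mem_stabilizer_iff]

theorem choose_ncard_dvd_ncard_orbit_mul_index (G : Subgroup (Perm α)) (B : Set α) :
    (Nat.card α).choose B.ncard ∣ (orbit G B).ncard * G.index := by
  rw [← index_stabilizer, ← Subgroup.index_map_subtype]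
  refine choose_ncard_dvd_index ?_
  rintro _ ⟨g, hg, rfl⟩
  exact hg

theorem isPretransitive_of_coprime_index (hG : (Nat.card α).Coprime G.index) :
    IsPretransitive G α := by
  refine ⟨fun x y => ?_⟩
  have hdvd : (Nat.card α).choose (orbit G x).ncard ∣ G.index :=
    choose_ncard_dvd_index fun g hg => smul_orbit (⟨g, hg⟩ : G) x
  have hcard : Nat.card α ∣ (orbit G x).ncard := by
    simpa using sub_dvd_descFactorial_of_coprime_choose (s := 0) (hG.coprime_dvd_right hdvd)
  have hpos : 0 < (orbit G x).ncard := (Set.ncard_pos).mpr (nonempty_orbit x)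
  have huniv : orbit G x = Set.univ := (Set.eq_univ_iff_ncard _).mpr
    ((Set.ncard_le_card _).antisymm (Nat.le_of_dvd hpos hcard))
  exact mem_orbit_iff.mp (huniv ▸ Set.mem_univ y)

theorem choose_ncard_sub_one_dvd_index_of_isBlock [IsPretransitive G α] (hB : IsBlock G B)
    (hne : B.Nonempty) : (Nat.card α - 1).choose (B.ncard - 1) ∣ G.index := by
  have hab : B.ncard * (orbit G B).ncard = Nat.card α := hB.ncard_block_mul_ncard_orbit_eq hne
  have hpos : 0 < Nat.card α := hab ▸ Nat.mul_pos ((Set.ncard_pos).mpr hne)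
    ((Set.ncard_pos).mpr (nonempty_orbit B))
  obtain ⟨a, ha⟩ := Nat.exists_eq_add_one_of_ne_zero ((Set.ncard_pos).mpr hne).ne'
  obtain ⟨m, hm⟩ := Nat.exists_eq_add_one_of_ne_zero hpos.ne'
  have hchoose : (m + 1).choose (a + 1) = (orbit G B).ncard * m.choose a := by
    refine Nat.eq_of_mul_eq_mul_right a.succ_pos ?_
    rw [← Nat.add_one_mul_choose_eq, ← hm, ← hab, ha, Nat.succ_eq_add_one]
    ring
  have hdvd := choose_ncard_dvd_ncard_orbit_mul_index G B
  rw [hm, ha, hchoose] at hdvd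
  simpa [hm, ha] using Nat.dvd_of_mul_dvd_mul_left ((Set.ncard_pos).mpr (nonempty_orbit B)) hdvd

end

section

variable {α : Type*} [Fintype α] [DecidableEq α] {G : Subgroup (Perm α)} {B : Set α} {g : Perm α}

theorem smul_eq_of_isBlock_of_isCycle_prime_mem (hB : IsBlock G B) (hgG : g ∈ G) (hg : g.IsCycle)
    (hp : g.support.card.Prime) {x y : α} (hx : x ∈ B) (hy : y ∈ B) (hxy : x ≠ y)
    (hgx : g x ≠ x) : g • B = B := by
  by_cases hgy : g y = y
  · exact hB.smul_eq_of_mem (g := (⟨g, hgG⟩ : G)) (a := y) hy (by simpa [Subgroup.smul_def, hgy])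
  obtain ⟨j, hj⟩ := hg.exists_pow_eq hgx hgy
  have hgj : g ^ j ∈ stabilizer (Perm α) B :=
    hB.smul_eq_of_mem (g := (⟨g ^ j, pow_mem hgG j⟩ : G)) (a := x) hx
      (by simpa [Subgroup.smul_def, hj])
  have hjp : ¬ g.support.card ∣ j := by
    rw [← hg.orderOf, orderOf_dvd_iff_pow_eq_one]
    exact fun hone => hxy (by simpa [hone] using hj)
  have hgen : g ∈ Subgroup.zpowers (g ^ j) := by
    rw [mem_zpowers_pow_iff, hg.orderOf]
    exact ((hp.coprime_iff_not_dvd).mpr hjp).symm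
  exact Subgroup.zpowers_le.mpr hgj hgen

theorem card_support_le_ncard_of_isBlock [IsPretransitive G α] (hB : IsBlock G B)
    (hnt : B.Nontrivial) (hgG : g ∈ G) (hg : g.IsCycle) (hp : g.support.card.Prime) :
    g.support.card ≤ B.ncard := by
  obtain ⟨x, hgx, hcycle⟩ := id hg
  obtain ⟨z, hz⟩ := hnt.nonempty
  obtain ⟨k, rfl⟩ := exists_smul_eq G z x
  obtain ⟨y, hy, hyz⟩ := hnt.exists_ne z
  have hstab : g ∈ stabilizer (Perm α) (k • B) :=
    smul_eq_of_isBlock_of_isCycle_prime_mem (hB.translate k) hgG hg hp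
      (Set.smul_mem_smul_set hz) (Set.smul_mem_smul_set hy) (by simpa using hyz.symm) hgx
  have hsub : (g.support : Set α) ⊆ k • B := by
    intro w hw
    obtain ⟨i, rfl⟩ := hcycle (mem_support.mp hw)
    have hgi : g ^ i • (k • B) = k • B := zpow_mem hstab i
    exact hgi ▸ Set.smul_mem_smul_set (Set.smul_mem_smul_set hz)
  calc g.support.card = (g.support : Set α).ncard := (Set.ncard_coe_finset _).symm
    _ ≤ (k • B).ncard := Set.ncard_le_ncard hsub
    _ = B.ncard := Set.ncard_smul_set ..

end

section

variable {α : Type*} [Finite α] {G : Subgroup (Perm α)}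

theorem three_le_ncard_of_isBlock_of_index_dvd_numDerangements (hα : 5 ≤ Nat.card α)
    (hG : G.index ∣ numDerangements (Nat.card α)) [IsPretransitive G α] {B : Set α}
    (hB : IsBlock G B) (hnt : B.Nontrivial) : 3 ≤ B.ncard := by
  have hab := hB.ncard_block_mul_ncard_orbit_eq hnt.nonempty
  have htwo : 2 ≤ B.ncard := (Set.one_lt_ncard_iff_nontrivial).mpr hnt
  by_contra! hlt
  classical
  cases nonempty_fintype α
  have heven : Even (Nat.card α) := by
    rw [← hab, show B.ncard = 2 by lia]
    exact even_two_mul _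
  obtain ⟨p, hp, hpn⟩ := Nat.exists_prime_and_dvd (n := Nat.card α - 3) (by grind)
  have := Fact.mk hp
  have hpG : ¬ p ∣ G.index := fun h => Nat.not_coprime_of_dvd_of_dvd hp.one_lt hpn (h.trans hG)
    (coprime_numDerangements_of_even (by lia) heven)
  have hple := Nat.le_of_dvd (by lia) hpn
  obtain ⟨g, hgG, hg, rfl⟩ := exists_isCycle_mem_of_not_dvd_index (G := G) (p := p)
    (by rw [← Nat.card_eq_fintype_card]; lia) hpG
  have hle := card_support_le_ncard_of_isBlock hB hnt hgG hg hp
  have : g.support.card = 2 := by have := hp.two_le; lia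
  rw [this] at hpn
  rw [even_iff_two_dvd] at heven
  lia

theorem isPreprimitive_of_index_dvd_numDerangements (hα : 5 ≤ Nat.card α)
    (hG : G.index ∣ numDerangements (Nat.card α)) : IsPreprimitive G α := by
  have hcoprime : (Nat.card α).Coprime G.index :=
    (coprime_numDerangements_add (k := 0) (Nat.coprime_one_right _)).coprime_dvd_right hG
  have hcoprime_two : (Nat.card α - 2).Coprime G.index := by
    refine .coprime_dvd_right hG ?_
    obtain ⟨m, hm⟩ := Nat.exists_eq_add_of_le' (show 2 ≤ Nat.card α by lia)
    rw [hm]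
    exact coprime_numDerangements_add (k := 2) (Nat.coprime_one_right _)
  have := isPretransitive_of_coprime_index hcoprime
  refine ⟨fun {B} hB => or_iff_not_imp_left.mpr fun hsub => ?_⟩
  have hnt : B.Nontrivial := Set.not_subsingleton_iff.mp hsub
  have hab := hB.ncard_block_mul_ncard_orbit_eq hnt.nonempty
  have ha := three_le_ncard_of_isBlock_of_index_dvd_numDerangements hα hG hB hnt
  have hchoose := choose_ncard_sub_one_dvd_index_of_isBlock hB hnt.nonempty
  by_contra huniv
  have hb : 2 ≤ (orbit G B).ncard := by
    by_contra! hlt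
    refine huniv ((Set.eq_univ_iff_ncard _).mpr ?_)
    have : (orbit G B).ncard = 1 := by
      have := (Set.ncard_pos).mpr (nonempty_orbit B (M := G))
      lia
    rw [← hab, this, mul_one]
  obtain ⟨hb2, heven⟩ := eq_two_and_even_of_mul_sub_two_dvd ha hb
    (hab ▸ sub_dvd_descFactorial_of_coprime_choose (s := 1)
      (hcoprime_two.coprime_dvd_right hchoose))
  have hcoprime_three : (Nat.card α - 3).Coprime G.index :=
    (coprime_numDerangements_of_even (by lia) (hab ▸ heven.mul_right _)).coprime_dvd_right hG
  refine two_mul_sub_three_not_dvd_descFactorial (a := B.ncard) (by grind) ?_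
  have := sub_dvd_descFactorial_of_coprime_choose (s := 2)
    (hcoprime_three.coprime_dvd_right hchoose)
  rw [← hab, hb2, mul_comm] at this
  exact this

end

section

variable {α : Type*} [Fintype α] [DecidableEq α] {G : Subgroup (Perm α)}

theorem alternatingGroup_le_of_index_lt_card (hα : 5 ≤ Nat.card α)
    (hG : G.index < Nat.card α) : alternatingGroup α ≤ G := by
  have hcore : G.normalCore ≠ ⊥ := by
    intro hbot
    rw [Subgroup.normalCore_eq_ker, MonoidHom.ker_eq_bot_iff] at hbot
    have hle := Nat.card_le_card_of_injective _ hbot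
    rw [Nat.card_perm, Nat.card_perm] at hle
    have hpos : 0 < G.index := Nat.pos_of_ne_zero Subgroup.index_ne_zero_of_finite
    exact hle.not_gt ((Nat.factorial_lt hpos).mpr hG)
  have hnontrivial : Nontrivial G.normalCore := (Subgroup.nontrivial_iff_ne_bot _).mpr hcore
  exact (alternatingGroup_le_of_normal hα hnontrivial).trans G.normalCore_le

theorem alternatingGroup_le_of_index_dvd_numDerangements_of_card_eq_seven
    (hα : Nat.card α = 7) (hG : G.index ∣ numDerangements 7) : alternatingGroup α ≤ G := by
  have hD : numDerangements 7 = 1854 := by decide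
  have hprim : IsPreprimitive G α :=
    isPreprimitive_of_index_dvd_numDerangements (by lia) (by rwa [hα])
  have := Fact.mk Nat.prime_five
  have hfive : ¬ 5 ∣ G.index := fun h => absurd (h.trans hG) (by norm_num [hD])
  obtain ⟨g, hgG, hg, hgcard⟩ := exists_isCycle_mem_of_not_dvd_index (G := G) (p := 5)
    (by rw [← Nat.card_eq_fintype_card]; lia) hfive
  have htrans := isMultiplyPretransitive_of_isCycle_prime_mem hprim hgG hg
    (hgcard ▸ Nat.prime_five)
  rw [Finset.card_compl, hgcard, ← Nat.card_eq_fintype_card, hα] at htrans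
  have hfactorial : G.index ∣ (7 - 3)! :=
    hα ▸ index_dvd_factorial_of_isMultiplyPretransitive (k := 3) (by lia) (hG := htrans)
  have hsix : G.index ∣ 6 := by simpa [hD, Nat.factorial] using Nat.dvd_gcd hG hfactorial
  exact alternatingGroup_le_of_index_lt_card (by lia)
    ((Nat.le_of_dvd (by lia) hsix).trans_lt (by lia))

theorem alternatingGroup_le_of_index_dvd_numDerangements (hα : 5 ≤ Nat.card α)
    (hG : G.index ∣ numDerangements (Nat.card α)) : alternatingGroup α ≤ G := by
  by_cases hseven : Nat.card α = 7
  · exact alternatingGroup_le_of_index_dvd_numDerangements_of_card_eq_seven hseven (hseven ▸ hG)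
  have hprim := isPreprimitive_of_index_dvd_numDerangements hα hG
  obtain ⟨p, hp, hpD, hpcard⟩ := exists_prime_not_dvd_numDerangements hα hseven
  rw [Nat.card_eq_fintype_card] at hα hpcard
  have := Fact.mk hp
  obtain ⟨g, hgG, hg, rfl⟩ := exists_isCycle_mem_of_not_dvd_index (G := G) (p := p) (by lia)
    fun h => hpD (h.trans hG)
  rcases hpcard with hthree | hle
  · exact alternatingGroup_le_of_isPreprimitive_of_isThreeCycle_mem hprim
      (card_support_eq_three_iff.mp hthree) hgG
  · exact alternatingGroup_le_of_isPreprimitive_of_isCycle_prime_mem hprim hgG hg hp hle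

theorem eq_alternatingGroup_or_eq_top_of_le (hG : alternatingGroup α ≤ G) [Nontrivial α] :
    G = alternatingGroup α ∨ G = ⊤ := by
  have hindex : G.index ∣ 2 :=
    alternatingGroup.index_eq_two (α := α) ▸ Subgroup.index_dvd_of_le hG
  rcases (Nat.dvd_prime Nat.prime_two).mp hindex with hone | htwo
  · exact .inr (Subgroup.index_eq_one.mp hone)
  · exact .inl (eq_alternatingGroup_of_index_eq_two htwo)

theorem denominator_of_derangement_proportion_divides_order_general (hα : 5 ≤ Nat.card α)
    (h : ((numDerangements (Nat.card α) : ℚ) / (Nat.card α)!).den ∣ Nat.card G) :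
    G = alternatingGroup α ∨ G = ⊤ := by
  have hindex : G.index ∣ numDerangements (Nat.card α) := by
    rw [← Nat.card_perm, ← G.index_mul_card] at h
    exact dvd_of_den_div_dvd
      (mul_ne_zero Subgroup.index_ne_zero_of_finite Nat.card_pos.ne') h
  have : Nontrivial α := Finite.one_lt_card_iff_nontrivial.mp (by lia)
  exact eq_alternatingGroup_or_eq_top_of_le
    (alternatingGroup_le_of_index_dvd_numDerangements hα hindex)

end

theorem denominator_of_derangement_proportion_divides_order
    (n : ℕ) (hn : 5 ≤ n) (G : Subgroup (Equiv.Perm (Fin n)))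
    (h : (((numDerangements n : ℚ) / (Nat.factorial n : ℚ)).den : ℕ) ∣ Nat.card G) :
    G = alternatingGroup (Fin n) ∨ G = ⊤ :=
  denominator_of_derangement_proportion_divides_order_general (by simpa using hn) (by simpa using h)
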